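/- Suppose the invertible RDS φ on 𝕊¹ is contractible and admits a reverse-stationary probability measure ρ that is atomless and has full support. Then for any connected set J⊆𝕊¹, ℙ(ω : l(φ(t,ω)J)→0 as t→∞) = 1−ρ(J). -/

import Mathlib

open MeasureTheory Filter Topology Set ENNReal

noncomputable section

/-- The natural projection `π : ℝ → 𝕊¹ = ℝ/ℤ`. -/
def circleProj (x : ℝ) : UnitAddCircle := (x : UnitAddCircle)

/-- `f` is an orientation-preserving homeomorphism of the circle: it admits a strictly
monotone degree-one lift. -/
def OrientPreserving (f : UnitAddCircle ≃ₜ UnitAddCircle) : Prop :=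
  ∃ F : ℝ → ℝ, StrictMono F ∧ (∀ x : ℝ, F (x + 1) = F x + 1) ∧
    ∀ x : ℝ, f (circleProj x) = circleProj (F x)

/-- The anticlockwise distance `d₊(x,y) = min {r ≥ 0 : π(x' + r) = y}` (`x'` any lift of `x`). -/
def dPlus (x y : UnitAddCircle) : ℝ :=
  sInf {r : ℝ | 0 ≤ r ∧ ∃ x' : ℝ, circleProj x' = x ∧ circleProj (x' + r) = y}

/-- An invertible random dynamical system on the circle, in discrete or continuous time,
driven by a stationary memoryless noise process. -/
structure RDS (Ω : Type) [m : MeasurableSpace Ω] where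
  /-- the time set `𝕋⁺`: either `ℕ ∪ {0}` or `[0,∞)`, viewed inside `ℝ` -/
  T : Set ℝ
  T_cases : T = Set.range (fun n : ℕ => (n : ℝ)) ∨ T = Set.Ici (0 : ℝ)
  /-- the filtration -/
  F : ℝ → MeasurableSpace Ω
  F_le : ∀ t ∈ T, F t ≤ m
  F_mono : ∀ s ∈ T, ∀ t ∈ T, s ≤ t → F s ≤ F t
  /-- the probability measure -/
  P : Measure Ω
  P_prob : IsProbabilityMeasure P
  /-- the time-shift maps on the noise space -/
  θ : ℝ → Ω → Ω
  θ_zero : θ 0 = id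
  θ_add : ∀ s ∈ T, ∀ t ∈ T, θ (s + t) = θ t ∘ θ s
  θ_preserving : ∀ t ∈ T, MeasurePreserving (θ t) P P
  θ_adapted : ∀ s ∈ T, ∀ t ∈ T, @Measurable Ω Ω (F (s + t)) (F s) (θ t)
  θ_indep : ∀ t ∈ T, ∀ E A : Set Ω, MeasurableSet[F t] E →
    MeasurableSet[⨆ s ∈ T, F s] A → P (E ∩ θ t ⁻¹' A) = P E * P A
  /-- the random homeomorphisms -/
  φ : ℝ → Ω → UnitAddCircle ≃ₜ UnitAddCircle
  φ_orient : ∀ t ∈ T, ∀ ω, OrientPreserving (φ t ω)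
  φ_meas : ∀ t ∈ T, @Measurable (Ω × UnitAddCircle) UnitAddCircle
    ((F t).prod inferInstance) inferInstance (fun p => φ t p.1 p.2)
  φ_zero : ∀ ω, φ 0 ω = Homeomorph.refl UnitAddCircle
  φ_cocycle : ∀ s ∈ T, ∀ t ∈ T, ∀ ω x, φ (s + t) ω x = φ t (θ s ω) (φ s ω x)
  φ_cadlag_right : ∀ ω, ∀ t ∈ T, ∀ tn : ℕ → ℝ, (∀ n, tn n ∈ T) → Antitone tn →
    Tendsto tn atTop (𝓝 t) → ∀ (xn : ℕ → UnitAddCircle) (x : UnitAddCircle),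
      Tendsto xn atTop (𝓝 x) →
      Tendsto (fun n => φ (tn n) ω (xn n)) atTop (𝓝 (φ t ω x))
  /-- the left-limit maps -/
  φ_left_lim : ℝ → Ω → UnitAddCircle → UnitAddCircle
  φ_cadlag_left : ∀ ω, ∀ t ∈ T, ∀ tn : ℕ → ℝ, (∀ n, tn n ∈ T) → StrictMono tn →
    Tendsto tn atTop (𝓝 t) → ∀ (xn : ℕ → UnitAddCircle) (x : UnitAddCircle),
      Tendsto xn atTop (𝓝 x) →
      Tendsto (fun n => φ (tn n) ω (xn n)) atTop (𝓝 (φ_left_lim t ω x))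

/-- A probability measure on the circle is atomless if every singleton is null. -/
def Atomless (ρ : Measure UnitAddCircle) : Prop := ∀ x, ρ {x} = 0

/-- A measure on the circle has full support. -/
def FullSupport (ρ : Measure UnitAddCircle) : Prop :=
  ∀ U : Set UnitAddCircle, IsOpen U → U.Nonempty → 0 < ρ U

/-- The (topological) support of a measure on the circle. -/
def msupport (ρ : Measure UnitAddCircle) : Set UnitAddCircle :=
  {x | ∀ U : Set UnitAddCircle, IsOpen U → x ∈ U → 0 < ρ U}

namespace RDS

variable {Ω : Type} [m : MeasurableSpace Ω] (S : RDS Ω)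

/-- the future σ-algebra `𝓕₊ = σ(𝓕_t : t ∈ 𝕋⁺)`. -/
def Fplus : MeasurableSpace Ω := ⨆ t ∈ S.T, S.F t

/-- The filter "t → ∞ along the time set 𝕋⁺". -/
def tFilter : Filter ℝ := atTop ⊓ 𝓟 S.T

/-- two-point contractibility. -/
def Contractible : Prop := ∀ x y : UnitAddCircle, x ≠ y →
  0 < S.P {ω | ∃ t ∈ S.T, dist (S.φ t ω x) (S.φ t ω y) < dist x y}

/-- compressibility. -/
def Compressible : Prop := ∀ x y : UnitAddCircle, x ≠ y →
  0 < S.P {ω | ∃ t ∈ S.T, dPlus (S.φ t ω x) (S.φ t ω y) < dPlus x y}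

/-- `p` is a deterministic fixed point. -/
def DetFixedPoint (p : UnitAddCircle) : Prop :=
  ∀ᵐ ω ∂S.P, ∀ t ∈ S.T, S.φ t ω p = p

/-- `A` is forward-invariant. -/
def ForwardInvariant (A : Set UnitAddCircle) : Prop :=
  ∀ᵐ ω ∂S.P, ∀ t ∈ S.T, ⇑(S.φ t ω) '' A ⊆ A

/-- reverse-minimal dynamics: the only open forward-invariant sets are `∅` and `𝕊¹`. -/
def ReverseMinimal : Prop :=
  ∀ A : Set UnitAddCircle, IsOpen A → S.ForwardInvariant A → A = ∅ ∨ A = Set.univ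

/-- synchronisation. -/
def Synchronising : Prop := ∀ x y : UnitAddCircle,
  S.P {ω | Tendsto (fun t => dist (S.φ t ω x) (S.φ t ω y)) S.tFilter (𝓝 0)} = 1

/-- everywhere local stability. -/
def EverywhereLocallyStable : Prop := ∀ x : UnitAddCircle,
  S.P {ω | ∃ U : Set UnitAddCircle, IsOpen U ∧ x ∈ U ∧
    Tendsto (fun t => volume (⇑(S.φ t ω) '' U)) S.tFilter (𝓝 0)} = 1

/-- stable synchronisation. -/
def StablySynchronising : Prop := S.Synchronising ∧ S.EverywhereLocallyStable

/-- `ρ` is reverse-stationary: `ρ(A) = ∫ ρ(φ(t,ω)A) ℙ(dω)` for all `t ∈ 𝕋⁺`, Borel `A`. -/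
def ReverseStationary (ρ : Measure UnitAddCircle) : Prop :=
  ∀ t ∈ S.T, ∀ A : Set UnitAddCircle, MeasurableSet A →
    ρ A = ∫⁻ ω, ρ (⇑(S.φ t ω) '' A) ∂S.P

/-- `r` is a crack point of `ω`. -/
def CrackPoint (ω : Ω) (r : UnitAddCircle) : Prop :=
  ∀ G : Set UnitAddCircle, IsClosed G → r ∉ G →
    Tendsto (fun t => volume (⇑(S.φ t ω) '' G)) S.tFilter (𝓝 0)

/-- the set of contractive sample points. -/
def Ωc : Set Ω := {ω | ∃ r, S.CrackPoint ω r}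

/-- the reverse transition probabilities `φ̄ₓᵗ(A) = ℙ(ω : φ(t,ω)⁻¹(x) ∈ A)`. -/
def revTrans (t : ℝ) (x : UnitAddCircle) (A : Set UnitAddCircle) : ℝ≥0∞ :=
  S.P {ω | (S.φ t ω).symm x ∈ A}

/-- the forward transition probabilities `φₓᵗ(A) = ℙ(ω : φ(t,ω)x ∈ A)`. -/
def fwdTrans (t : ℝ) (x : UnitAddCircle) (A : Set UnitAddCircle) : ℝ≥0∞ :=
  S.P {ω | S.φ t ω x ∈ A}

/-- `ρ` is stationary for a transition family `ν`. -/
def StationaryFor (ν : ℝ → UnitAddCircle → Set UnitAddCircle → ℝ≥0∞)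
    (ρ : Measure UnitAddCircle) : Prop :=
  ∀ t ∈ S.T, ∀ A : Set UnitAddCircle, MeasurableSet A → ρ A = ∫⁻ x, ν t x A ∂ρ

/-- `ρ` is ergodic for a transition family `ν`. -/
def ErgodicFor (ν : ℝ → UnitAddCircle → Set UnitAddCircle → ℝ≥0∞)
    (ρ : Measure UnitAddCircle) : Prop :=
  S.StationaryFor ν ρ ∧ ∀ A : Set UnitAddCircle, MeasurableSet A →
    (∀ t ∈ S.T, ∀ᵐ x ∂ρ, x ∈ A → ν t x A = 1) → ρ A = 0 ∨ ρ A = 1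

end RDS

set_option linter.unusedSectionVars false

abbrev CC := UnitAddCircle

/-- coordinate in `[0,1)` -/
def LL (z : CC) : ℝ := (AddCircle.equivIco (1:ℝ) 0 z : ℝ)

lemma LL_nonneg (z : CC) : 0 ≤ LL z := (AddCircle.equivIco (1:ℝ) 0 z).2.1
lemma LL_lt_one (z : CC) : LL z < 1 := by
  have := (AddCircle.equivIco (1:ℝ) 0 z).2.2
  simpa [LL] using this
lemma coe_LL (z : CC) : ((LL z : ℝ) : CC) = z := AddCircle.coe_equivIco
lemma LL_coe {r : ℝ} (h0 : 0 ≤ r) (h1 : r < 1) : LL (r : CC) = r := by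
  unfold LL
  exact AddCircle.equivIco_coe_of_mem (by simp [h0, h1])
lemma LL_inj : Function.Injective LL := by
  intro a b hab
  rw [← coe_LL a, ← coe_LL b, hab]
lemma LL_zero : LL 0 = 0 := by
  have := LL_coe (r := 0) le_rfl one_pos
  simpa using this
lemma LL_eq_zero {z : CC} : LL z = 0 ↔ z = 0 :=
  ⟨fun h => LL_inj (h.trans LL_zero.symm), fun h => h ▸ LL_zero⟩
lemma LL_pos {z : CC} (h : z ≠ 0) : 0 < LL z :=
  lt_of_le_of_ne (LL_nonneg z) (fun h' => h (LL_eq_zero.1 h'.symm))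
lemma measurable_LL : Measurable LL :=
  measurable_subtype_coe.comp (AddCircle.measurableEquivIco (1:ℝ) 0).measurable
lemma continuousAt_LL {z : CC} (h : z ≠ 0) : ContinuousAt LL z :=
  continuous_subtype_val.continuousAt.comp
    (AddCircle.continuousAt_equivIco (1:ℝ) 0 (by simpa using h))

lemma coe_one_CC : ((1:ℝ) : CC) = 0 := AddCircle.coe_period 1

lemma LL_coe_sub {a b : ℝ} (ha : 0 ≤ a) (ha1 : a < 1) (hb : 0 ≤ b) (hb1 : b < 1) :
    LL ((b : CC) - (a : CC)) = if a ≤ b then b - a else 1 + b - a := by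
  split_ifs with h
  · rw [← AddCircle.coe_sub]; exact LL_coe (by linarith) (by linarith)
  · have : ((b : CC) - (a : CC)) = ((1 + b - a : ℝ) : CC) := by
      rw [AddCircle.coe_sub, AddCircle.coe_add, coe_one_CC, zero_add]
    rw [this]; push Not at h; exact LL_coe (by linarith) (by linarith)

lemma LL_sub (x y : CC) : LL (y - x) = if LL x ≤ LL y then LL y - LL x else 1 + LL y - LL x := by
  have := LL_coe_sub (LL_nonneg x) (LL_lt_one x) (LL_nonneg y) (LL_lt_one y)
  rwa [coe_LL, coe_LL] at this

/-- open arc -/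
def arc (x y : CC) : Set CC := {z | 0 < LL (z - x) ∧ LL (z - x) < LL (y - x)}

lemma arc_self (x : CC) : arc x x = ∅ := by
  ext z; simp only [arc, sub_self, LL_zero, mem_setOf_eq, mem_empty_iff_false, iff_false]
  intro h; linarith [h.1, h.2]

lemma measurableSet_arc (x y : CC) : MeasurableSet (arc x y) := by
  have h : Measurable (fun z : CC => LL (z - x)) := measurable_LL.comp (measurable_sub_const x)
  exact (measurableSet_lt measurable_const h).inter (measurableSet_lt h measurable_const)

lemma arc_orient_fwd {f : CC ≃ₜ CC} (hf : OrientPreserving f) {x y z : CC} (h : z ∈ arc x y) :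
    f z ∈ arc (f x) (f y) := by
  obtain ⟨F, hF, hF1, hFf⟩ := hf
  obtain ⟨h1, h2⟩ := h
  have hz : circleProj (LL x + LL (z - x)) = z := by
    simp only [circleProj, AddCircle.coe_add, coe_LL]; abel
  have hy : circleProj (LL x + LL (y - x)) = y := by
    simp only [circleProj, AddCircle.coe_add, coe_LL]; abel
  have hx : circleProj (LL x) = x := coe_LL x
  set a := LL x
  set b := LL (z - x)
  set c := LL (y - x)
  have hc : c < 1 := LL_lt_one _
  have e1 : F a < F (a + b) := hF (by linarith)
  have e2 : F (a + b) < F (a + c) := hF (by linarith)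
  have e3 : F (a + c) < F a + 1 := by rw [← hF1]; exact hF (by linarith)
  have hz' : LL (f z - f x) = F (a + b) - F a := by
    rw [← hz, ← hx, hFf, hFf]; simp only [circleProj]
    rw [← AddCircle.coe_sub]; exact LL_coe (by linarith) (by linarith)
  have hy' : LL (f y - f x) = F (a + c) - F a := by
    rw [← hy, ← hx, hFf, hFf]; simp only [circleProj]
    rw [← AddCircle.coe_sub]; exact LL_coe (by linarith) (by linarith)
  refine ⟨?_, ?_⟩
  · rw [hz']; linarith
  · rw [hz', hy']; linarith

lemma arc_orient {f : CC ≃ₜ CC} (hf : OrientPreserving f) (x y : CC) :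
    f '' arc x y = arc (f x) (f y) := by
  apply Subset.antisymm
  · rintro _ ⟨z, hz, rfl⟩; exact arc_orient_fwd hf hz
  · intro w hw
    obtain ⟨z, rfl⟩ := f.surjective w
    refine ⟨z, ?_, rfl⟩
    obtain ⟨h1, h2⟩ := hw
    have hzx : z - x ≠ 0 := by
      intro h; rw [sub_eq_zero] at h; subst h; simp [LL_zero] at h1
    refine ⟨LL_pos hzx, ?_⟩
    by_contra hcon
    push Not at hcon
    rcases hcon.lt_or_eq with h | h
    · by_cases hyx : y - x = 0
      · rw [sub_eq_zero] at hyx; subst hyx; rw [sub_self, LL_zero] at h2; linarith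
      · have := (arc_orient_fwd hf (show y ∈ arc x z from ⟨LL_pos hyx, h⟩)).2
        linarith
    · have := LL_inj h
      rw [sub_left_inj] at this; subst this; exact lt_irrefl _ h2

lemma mem_arc_iff (x y z : CC) : z ∈ arc x y ↔
    if LL x ≤ LL y then LL x < LL z ∧ LL z < LL y else LL x < LL z ∨ LL z < LL y := by
  have hx := LL_nonneg x; have hx' := LL_lt_one x
  have hy := LL_nonneg y; have hy' := LL_lt_one y
  have hz := LL_nonneg z; have hz' := LL_lt_one z
  simp only [arc, mem_setOf_eq, LL_sub x]
  split_ifs with h1 h2 h3 <;> constructor <;> intro h <;> grind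

lemma norm_le_LL (z : CC) : ‖z‖ ≤ LL z := by
  conv_lhs => rw [← coe_LL z]
  rw [UnitAddCircle.norm_eq]
  have := round_le (LL z) 0
  simpa [abs_of_nonneg (LL_nonneg z)] using this

lemma arc_subset_closedBall (x y : CC) : arc x y ⊆ Metric.closedBall x (LL (y - x)) := by
  intro z hz
  rw [Metric.mem_closedBall, dist_eq_norm]
  exact (norm_le_LL _).trans hz.2.le

lemma exists_lift_norm (z : CC) : ∃ e : ℝ, (e : CC) = z ∧ |e| = ‖z‖ := by
  refine ⟨LL z - round (LL z), ?_, ?_⟩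
  · rw [AddCircle.coe_sub, coe_LL]
    have : ((round (LL z) : ℝ) : CC) = 0 := by
      rw [AddCircle.coe_eq_zero_iff]; exact ⟨round (LL z), by simp⟩
    rw [this, sub_zero]
  · conv_rhs => rw [← coe_LL z]
    rw [UnitAddCircle.norm_eq]

lemma exists_ball_subset_arc (x y : CC) {r : ℝ} (hr : r ≤ LL (y - x)) :
    ∃ c, Metric.ball c (r / 2) ⊆ arc x y := by
  refine ⟨x + ((r / 2 : ℝ) : CC), ?_⟩
  intro z hz
  rw [Metric.mem_ball, dist_eq_norm] at hz
  obtain ⟨e, he, hen⟩ := exists_lift_norm (z - (x + ((r / 2 : ℝ) : CC)))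
  rw [← hen, abs_lt] at hz
  have hl := LL_lt_one (y - x)
  have : z - x = ((r / 2 + e : ℝ) : CC) := by rw [AddCircle.coe_add, he]; abel
  have hL : LL (z - x) = r / 2 + e := by
    rw [this]; exact LL_coe (by linarith) (by linarith)
  exact ⟨by rw [hL]; linarith, by rw [hL]; linarith⟩

lemma uniform_small (ν : Measure CC) [IsFiniteMeasure ν] (ha : Atomless ν) {ε : ℝ≥0∞} (hε : 0 < ε) :
    ∃ r > 0, ∀ x, ν (Metric.ball x r) < ε := by
  have h1 : ∀ x : CC, ∃ s > 0, ν (Metric.ball x s) < ε := by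
    intro x
    have ht : Tendsto (fun s : ℝ => ν (Metric.closedBall x s)) (𝓝[>] 0) (𝓝 (ν {x})) := by
      have := tendsto_measure_biInter_gt (μ := ν) (s := fun s : ℝ => Metric.closedBall x s) (a := 0)
        (fun r _ => Metric.isClosed_closedBall.measurableSet.nullMeasurableSet)
        (fun i j _ hij => Metric.closedBall_subset_closedBall hij) ⟨1, one_pos, measure_ne_top _ _⟩
      have h2 : (⋂ r > (0:ℝ), Metric.closedBall x r) = {x} := by
        ext z
        simp only [mem_iInter, Metric.mem_closedBall, mem_singleton_iff]
        constructor
        · intro h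
          have : dist z x ≤ 0 := le_of_forall_pos_le_add (fun e he => by simpa using h e he)
          exact dist_le_zero.1 this
        · rintro rfl r hr; simpa using hr.le
      rwa [h2] at this
    rw [ha x] at ht
    obtain ⟨s, hs, hs0⟩ := ((ht.eventually (gt_mem_nhds hε)).and self_mem_nhdsWithin).exists
    exact ⟨s, hs0, (measure_mono Metric.ball_subset_closedBall).trans_lt hs⟩
  choose s hs0 hs using h1
  obtain ⟨δ, hδ, h⟩ := lebesgue_number_lemma_of_metric (s := (univ : Set CC))
    (c := fun x => Metric.ball x (s x)) isCompact_univ (fun i => Metric.isOpen_ball)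
    (fun x _ => mem_iUnion.2 ⟨x, Metric.mem_ball_self (hs0 x)⟩)
  refine ⟨δ, hδ, fun x => ?_⟩
  obtain ⟨i, hi⟩ := h x (mem_univ _)
  exact (measure_mono hi).trans_lt (hs i)

lemma uniform_big (ν : Measure CC) (hf : FullSupport ν) {r : ℝ} (hr : 0 < r) :
    ∃ δ > 0, ∀ x, δ ≤ ν (Metric.ball x r) := by
  obtain ⟨t, -, ht, hcov⟩ := (isCompact_univ (X := CC)).finite_cover_balls (half_pos hr)
  classical
  have hfin := ht
  have hne : t.Nonempty := by
    by_contra hcon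
    rw [not_nonempty_iff_eq_empty] at hcon
    subst hcon
    simpa using hcov (mem_univ (0 : CC))
  obtain ⟨i, hi, hmin⟩ := ht.exists_minimalFor (fun x => ν (Metric.ball x (r/2))) t hne
  refine ⟨ν (Metric.ball i (r/2)), hf _ Metric.isOpen_ball ⟨i, Metric.mem_ball_self (half_pos hr)⟩,
    fun x => ?_⟩
  obtain ⟨j, hj, hx⟩ : ∃ j ∈ t, x ∈ Metric.ball j (r/2) := by simpa using hcov (mem_univ x)
  have h1 : ν (Metric.ball i (r/2)) ≤ ν (Metric.ball j (r/2)) := by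
    rcases le_total (ν (Metric.ball i (r/2))) (ν (Metric.ball j (r/2))) with h | h
    · exact h
    · exact hmin hj h
  refine h1.trans (measure_mono ?_)
  apply Metric.ball_subset_ball'
  rw [Metric.mem_ball, dist_comm] at hx
  linarith

lemma arc_measure_compare (μ ν : Measure CC) [IsFiniteMeasure ν] (hμ : FullSupport μ)
    (hν : Atomless ν) {ε : ℝ≥0∞} (hε : 0 < ε) :
    ∃ δ > 0, ∀ x y, μ (arc x y) < δ → ν (arc x y) < ε := by
  obtain ⟨r, hr, h1⟩ := uniform_small ν hν hε
  obtain ⟨δ, hδ, h2⟩ := uniform_big μ hμ (half_pos hr)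
  refine ⟨δ, hδ, fun x y h => ?_⟩
  rcases lt_or_ge (LL (y - x)) r with hlt | hge
  · refine (measure_mono ?_).trans_lt (h1 x)
    exact (arc_subset_closedBall x y).trans (Metric.closedBall_subset_ball hlt)
  · obtain ⟨c, hc⟩ := exists_ball_subset_arc x y hge
    exact absurd h (not_lt.2 ((h2 c).trans (measure_mono hc)))

lemma preconnected_classify {J : Set CC} (hJ : IsPreconnected J) :
    J.Subsingleton ∨ Jᶜ.Subsingleton ∨
      ∃ a b, a ≠ b ∧ arc a b ⊆ J ∧ J ⊆ arc a b ∪ {a, b} := by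
  by_cases hs : J.Subsingleton
  · exact Or.inl hs
  right
  by_cases hu : J = univ
  · left; rw [hu, compl_univ]; exact subsingleton_empty
  obtain ⟨p, hp⟩ := (ne_univ_iff_exists_notMem J).1 hu
  set c : CC → ℝ := fun z => LL (z - p) with hc
  have hcinj : Function.Injective c := fun x y h => by
    have := LL_inj h
    rwa [sub_left_inj] at this
  have hcont : ContinuousOn c J := by
    intro z hz
    have hzp : z - p ≠ 0 := fun h => hp (by rw [sub_eq_zero] at h; rwa [← h])
    refine ContinuousAt.continuousWithinAt ?_
    exact ContinuousAt.comp (f := fun z : CC => z - p) (continuousAt_LL hzp)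
      (continuous_id.sub continuous_const).continuousAt
  have hI : (c '' J).OrdConnected := isPreconnected_iff_ordConnected.1 (hJ.image c hcont)
  have hbb : BddBelow (c '' J) := ⟨0, by rintro _ ⟨z, -, rfl⟩; exact LL_nonneg _⟩
  have hba : BddAbove (c '' J) := ⟨1, by rintro _ ⟨z, -, rfl⟩; exact (LL_lt_one _).le⟩
  rw [not_subsingleton_iff] at hs
  obtain ⟨z1, hz1, z2, hz2, hne⟩ := hs
  have hneI : (c '' J).Nonempty := ⟨c z1, z1, hz1, rfl⟩
  set a' := sInf (c '' J) with ha'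
  set b' := sSup (c '' J) with hb'
  have hmem : ∀ z ∈ J, a' ≤ c z ∧ c z ≤ b' := fun z hz =>
    ⟨csInf_le hbb ⟨z, hz, rfl⟩, le_csSup hba ⟨z, hz, rfl⟩⟩
  have h0 : 0 ≤ a' := le_csInf hneI (by rintro _ ⟨z, -, rfl⟩; exact LL_nonneg _)
  have h1 : b' ≤ 1 := csSup_le hneI (by rintro _ ⟨z, -, rfl⟩; exact (LL_lt_one _).le)
  have hab : a' < b' := by
    rcases lt_or_gt_of_ne (hcinj.ne hne) with h | h
    · exact (hmem z1 hz1).1.trans_lt (h.trans_le (hmem z2 hz2).2)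
    · exact (hmem z2 hz2).1.trans_lt (h.trans_le (hmem z1 hz1).2)
  have hin : ∀ z, a' < c z → c z < b' → z ∈ J := by
    intro z hz hz'
    obtain ⟨_, ⟨i, hi, rfl⟩, hi'⟩ := exists_lt_of_csInf_lt hneI hz
    obtain ⟨_, ⟨j, hj, rfl⟩, hj'⟩ := exists_lt_of_lt_csSup hneI hz'
    obtain ⟨z', hz', e⟩ := hI.out ⟨i, hi, rfl⟩ ⟨j, hj, rfl⟩ ⟨hi'.le, hj'.le⟩
    rwa [← hcinj e]
  by_cases hfull : a' = 0 ∧ b' = 1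
  · left
    have : ∀ z ∈ Jᶜ, z = p := by
      intro z hz
      by_contra hzp
      apply hz
      apply hin
      · rw [hfull.1]; exact LL_pos (sub_ne_zero.2 hzp)
      · rw [hfull.2]; exact LL_lt_one _
    intro x hx y hy
    rw [this x hx, this y hy]
  · right
    have hlt : b' - a' < 1 := by
      by_contra hcon
      exact hfull ⟨by linarith, by linarith⟩
    have hza : ∀ z, z - (p + (a' : CC)) = ((c z - a' : ℝ) : CC) := by
      intro z
      rw [AddCircle.coe_sub, hc]; simp only [coe_LL]; abel
    have hbL : LL (p + (b' : CC) - (p + (a' : CC))) = b' - a' := by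
      have : p + (b' : CC) - (p + (a' : CC)) = ((b' - a' : ℝ) : CC) := by
        rw [AddCircle.coe_sub]; abel
      rw [this]; exact LL_coe (by linarith) hlt
    refine ⟨p + (a' : CC), p + (b' : CC), ?_, ?_, ?_⟩
    · intro h
      rw [h, sub_self, LL_zero] at hbL
      linarith
    · rintro z ⟨hz1, hz2⟩
      rw [hbL] at hz2
      set s := LL (z - (p + (a' : CC))) with hs
      have hcz : c z = a' + s := by
        have : z - p = ((a' + s : ℝ) : CC) := by
          rw [AddCircle.coe_add, hs, coe_LL]; abel
        rw [hc]; simp only [this]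
        exact LL_coe (by linarith) (by linarith)
      exact hin z (by linarith) (by linarith)
    · intro z hz
      obtain ⟨e1, e2⟩ := hmem z hz
      have hL : LL (z - (p + (a' : CC))) = c z - a' := by
        rw [hza]; exact LL_coe (by linarith) (by linarith)
      have hzc : z = p + (c z : CC) := by rw [hc]; simp only [coe_LL]; abel
      rcases e1.eq_or_lt with h | h
      · right; left; rw [h]; exact hzc
      rcases e2.eq_or_lt with h' | h'
      · right; right; rw [mem_singleton_iff, ← h']; exact hzc
      · left
        exact ⟨by rw [hL]; linarith, by rw [hL, hbL]; linarith⟩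

section cdf
variable (ρ : Measure CC)

def GG (s : ℝ) : ℝ := ρ.real {z | LL z < s}

def gg (x : CC) : CC := ((GG ρ (LL x) : ℝ) : CC)

/-- the harmonic function -/
def uu (z : CC × CC) : ℝ := LL (gg ρ z.2 - gg ρ z.1)

variable [IsProbabilityMeasure ρ]

lemma meas_LL_lt (s : ℝ) : MeasurableSet {z : CC | LL z < s} :=
  measurableSet_lt measurable_LL measurable_const

lemma meas_LL_le (s : ℝ) : MeasurableSet {z : CC | LL z ≤ s} :=
  measurableSet_le measurable_LL measurable_const

lemma null_LL_eq {ρ : Measure CC} (ha : Atomless ρ) (s : ℝ) : ρ {z : CC | LL z = s} = 0 := by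
  by_cases h : ∃ z, LL z = s
  · obtain ⟨z, hz⟩ := h
    refine measure_mono_null ?_ (ha z)
    intro w hw
    exact LL_inj (hw.trans hz.symm)
  · refine measure_mono_null ?_ (measure_empty (μ := ρ))
    intro w hw
    exact h ⟨w, hw⟩

lemma GG_zero : GG ρ 0 = 0 := by
  have : {z : CC | LL z < 0} = ∅ := by
    ext z; simpa using LL_nonneg z
  simp [GG, this]

lemma GG_one : GG ρ 1 = 1 := by
  have : {z : CC | LL z < 1} = univ := by
    ext z; simpa using LL_lt_one z
  simp [GG, this]

lemma GG_mono : Monotone (GG ρ) := fun _ _ h =>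
  measureReal_mono (fun _ hz => lt_of_lt_of_le hz h)

lemma GG_strict (hf : FullSupport ρ) {a b : ℝ} (h0 : 0 ≤ a) (hab : a < b) (h1 : b ≤ 1) :
    GG ρ a < GG ρ b := by
  have hpos : 0 < ρ (((↑) : ℝ → CC) '' Ioo a b) :=
    hf _ (QuotientAddGroup.isOpenMap_coe _ isOpen_Ioo) ((nonempty_Ioo.2 hab).image _)
  have hsub : ((↑) : ℝ → CC) '' Ioo a b ⊆ {z | LL z < b} \ {z | LL z < a} := by
    rintro _ ⟨t, ht, rfl⟩
    have : LL (t : CC) = t := LL_coe (by linarith [ht.1]) (by linarith [ht.2])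
    refine ⟨?_, ?_⟩
    · show LL (t : CC) < b
      rw [this]; exact ht.2
    · show ¬ LL (t : CC) < a
      rw [this]; exact not_lt.2 ht.1.le
  have h2 : 0 < ρ.real ({z | LL z < b} \ {z | LL z < a}) := by
    rw [measureReal_def]
    exact ENNReal.toReal_pos (hpos.trans_le (measure_mono hsub)).ne' (measure_ne_top _ _)
  have hss : {z : CC | LL z < a} ⊆ {z | LL z < b} := fun z (hz : LL z < a) => hz.trans hab
  rw [measureReal_sdiff hss (meas_LL_lt a)] at h2
  unfold GG
  linarith

lemma GG_le_eq (ha : Atomless ρ) (s : ℝ) : ρ.real {z | LL z ≤ s} = GG ρ s := by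
  apply le_antisymm
  · have : {z : CC | LL z ≤ s} ⊆ {z | LL z < s} ∪ {z | LL z = s} := fun z (hz : LL z ≤ s) =>
      hz.lt_or_eq
    refine (measureReal_mono this).trans ((measureReal_union_le _ _).trans ?_)
    rw [measureReal_def (s := {z | LL z = s}), null_LL_eq ha]
    simp [GG]
  · exact measureReal_mono (fun z (hz : LL z < s) => hz.le)

lemma GG_continuous (ha : Atomless ρ) : Continuous (GG ρ) := by
  rw [continuous_iff_continuousAt]
  intro s
  have hG : GG ρ = fun s => ∫ z, ({z | LL z < s} : Set CC).indicator (fun _ => (1:ℝ)) z ∂ρ := by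
    ext s
    rw [integral_indicator (meas_LL_lt s)]
    simp [GG]
  rw [hG]
  apply continuousAt_of_dominated (bound := fun _ => 1)
  · exact Eventually.of_forall fun t =>
      (measurable_const.indicator (meas_LL_lt t)).aestronglyMeasurable
  · refine Eventually.of_forall fun t => Eventually.of_forall fun z => ?_
    by_cases h : LL z < t <;> simp [indicator, h]
  · exact integrable_const _
  · have : ∀ᵐ z ∂ρ, LL z ≠ s := by
      rw [ae_iff]; simpa using null_LL_eq ha s
    filter_upwards [this] with z hz
    rcases lt_or_gt_of_ne hz with h | h
    · refine ContinuousAt.congr (f := fun _ => (1:ℝ)) continuousAt_const ?_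
      filter_upwards [lt_mem_nhds h] with t ht
      simp [indicator, ht]
    · refine ContinuousAt.congr (f := fun _ => (0:ℝ)) continuousAt_const ?_
      filter_upwards [gt_mem_nhds h] with t ht
      simp [indicator, not_lt.2 ht.le]

lemma gg_continuous (ha : Atomless ρ) : Continuous (gg ρ) := by
  have : gg ρ = AddCircle.liftIco (1:ℝ) 0 (fun s => ((GG ρ s : ℝ) : CC)) := by
    ext x
    conv_rhs => rw [← coe_LL x]
    rw [AddCircle.liftIco_zero_coe_apply ⟨LL_nonneg x, LL_lt_one x⟩]
    rfl
  rw [this]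
  apply AddCircle.liftIco_zero_continuous
  · rw [GG_zero, GG_one, coe_one_CC, AddCircle.coe_zero]
  · exact ((AddCircle.continuous_mk' (1:ℝ)).comp (GG_continuous ρ ha)).continuousOn

lemma GG_nonneg (s : ℝ) : 0 ≤ GG ρ s := measureReal_nonneg

lemma GG_LL_lt (hf : FullSupport ρ) (x : CC) : GG ρ (LL x) < 1 := by
  rw [← GG_one ρ]; exact GG_strict ρ hf (LL_nonneg x) (LL_lt_one x) le_rfl

lemma uu_eq (hf : FullSupport ρ) (x y : CC) : uu ρ (x, y) =
    if LL x ≤ LL y then GG ρ (LL y) - GG ρ (LL x) else 1 + GG ρ (LL y) - GG ρ (LL x) := by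
  unfold uu gg
  rw [LL_coe_sub (GG_nonneg ρ _) (GG_LL_lt ρ hf _) (GG_nonneg ρ _) (GG_LL_lt ρ hf _)]
  have : GG ρ (LL x) ≤ GG ρ (LL y) ↔ LL x ≤ LL y := by
    constructor
    · intro h
      by_contra hcon
      push Not at hcon
      exact absurd h (not_le.2 (GG_strict ρ hf (LL_nonneg y) hcon (LL_lt_one x).le))
    · intro h; exact GG_mono ρ h
  simp [this]

lemma arc_eq_uu (ha : Atomless ρ) (hf : FullSupport ρ) (x y : CC) :
    ρ (arc x y) = ENNReal.ofReal (uu ρ (x, y)) := by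
  rw [← ofReal_measureReal, uu_eq ρ hf]
  congr 1
  split_ifs with h
  · rcases h.eq_or_lt with h' | h'
    · rw [LL_inj h', arc_self]; simp
    · have : arc x y = {z | LL z < LL y} \ {z | LL z ≤ LL x} := by
        ext z
        rw [mem_arc_iff, if_pos h]
        show _ ↔ LL z < LL y ∧ ¬ LL z ≤ LL x
        rw [not_le, and_comm]
      have hss : {z : CC | LL z ≤ LL x} ⊆ {z | LL z < LL y} :=
        fun z (hz : LL z ≤ LL x) => hz.trans_lt h'
      rw [this, measureReal_sdiff hss (meas_LL_le _),
        GG_le_eq ρ ha]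
      rfl
  · push Not at h
    have : (arc x y)ᶜ = {z | LL z ≤ LL x} \ {z | LL z < LL y} := by
      ext z
      rw [mem_compl_iff, mem_arc_iff, if_neg (not_le.2 h)]
      show _ ↔ LL z ≤ LL x ∧ ¬ LL z < LL y
      rw [not_or, not_lt]
    have h2 : ρ.real (arc x y)ᶜ = GG ρ (LL x) - GG ρ (LL y) := by
      have hss : {z : CC | LL z < LL y} ⊆ {z | LL z ≤ LL x} :=
        fun z (hz : LL z < LL y) => (hz.trans h).le
      rw [this, measureReal_sdiff hss (meas_LL_lt _),
        GG_le_eq ρ ha]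
      rfl
    rw [probReal_compl_eq_one_sub (measurableSet_arc x y)] at h2
    linarith

lemma uu_swap (hf : FullSupport ρ) {x y : CC} (h : x ≠ y) : uu ρ (y, x) = 1 - uu ρ (x, y) := by
  rw [uu_eq ρ hf, uu_eq ρ hf]
  have : LL x ≠ LL y := LL_inj.ne h
  split_ifs with h1 h2 h2
  · exact absurd (le_antisymm h2 h1) this
  · ring
  · ring
  · linarith

lemma uu_nonneg (z : CC × CC) : 0 ≤ uu ρ z := LL_nonneg _
lemma uu_lt_one (z : CC × CC) : uu ρ z < 1 := LL_lt_one _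

lemma uu_self (x : CC) : uu ρ (x, x) = 0 := by simp [uu, LL_zero]

lemma measurable_uu (ha : Atomless ρ) : Measurable (uu ρ) := by
  have hg := gg_continuous ρ ha
  exact measurable_LL.comp
    ((hg.comp continuous_snd).sub (hg.comp continuous_fst)).measurable

lemma isOpen_uu_gt (ha : Atomless ρ) {η : ℝ} (hη : 0 ≤ η) : IsOpen {z | η < uu ρ z} := by
  rw [isOpen_iff_mem_nhds]
  intro z hz
  have hg := gg_continuous ρ ha
  have hc : Continuous (fun z : CC × CC => gg ρ z.2 - gg ρ z.1) :=
    (hg.comp continuous_snd).sub (hg.comp continuous_fst)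
  have hne : gg ρ z.2 - gg ρ z.1 ≠ 0 := by
    intro h
    have hz' : η < uu ρ z := hz
    simp only [uu, h, LL_zero] at hz'
    linarith
  have : ContinuousAt (uu ρ) z :=
    ContinuousAt.comp (f := fun z : CC × CC => gg ρ z.2 - gg ρ z.1)
      (continuousAt_LL hne) hc.continuousAt
  exact this.eventually (lt_mem_nhds hz)

lemma continuous_ww : Continuous (fun z : CC => LL z * (1 - LL z)) := by
  have : (fun z : CC => LL z * (1 - LL z)) =
      AddCircle.liftIco (1:ℝ) 0 (fun s : ℝ => s * (1 - s)) := by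
    ext x
    conv_rhs => rw [← coe_LL x]
    rw [AddCircle.liftIco_zero_coe_apply ⟨LL_nonneg x, LL_lt_one x⟩]
  rw [this]
  apply AddCircle.liftIco_zero_continuous
  · simp
  · fun_prop

def vv (z : CC × CC) : ℝ := uu ρ z * (1 - uu ρ z)

lemma continuous_vv (ha : Atomless ρ) : Continuous (vv ρ) := by
  have hg := gg_continuous ρ ha
  exact continuous_ww.comp ((hg.comp continuous_snd).sub (hg.comp continuous_fst))

lemma vv_nonneg (z : CC × CC) : 0 ≤ vv ρ z :=
  mul_nonneg (uu_nonneg ρ z) (by linarith [uu_lt_one ρ z])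
lemma vv_le_one (z : CC × CC) : vv ρ z ≤ 1 := by
  unfold vv; nlinarith [uu_nonneg ρ z, uu_lt_one ρ z]

end cdf

namespace RDS
variable {Ω : Type} [m : MeasurableSpace Ω] (S : RDS Ω)

/-- `Ω` with the future σ-algebra. -/
def OmP (_S : RDS Ω) : Type := Ω

instance instOmP : MeasurableSpace (S.OmP) := S.Fplus

def Phi (t : ℝ) (ω : Ω) (z : CC × CC) : CC × CC := (S.φ t ω z.1, S.φ t ω z.2)

lemma nat_mem (n : ℕ) : (n : ℝ) ∈ S.T := by
  rcases S.T_cases with h | h <;> rw [h]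
  · exact ⟨n, rfl⟩
  · exact mem_Ici.2 (Nat.cast_nonneg n)

lemma zero_mem : (0 : ℝ) ∈ S.T := by simpa using S.nat_mem 0

lemma add_mem {s t : ℝ} (hs : s ∈ S.T) (ht : t ∈ S.T) : s + t ∈ S.T := by
  rcases S.T_cases with h | h <;> rw [h] at hs ht ⊢
  · obtain ⟨a, rfl⟩ := hs
    obtain ⟨b, rfl⟩ := ht
    exact ⟨a + b, by push_cast; rfl⟩
  · exact mem_Ici.2 (add_nonneg (mem_Ici.1 hs) (mem_Ici.1 ht))

lemma T_nonneg {t : ℝ} (ht : t ∈ S.T) : 0 ≤ t := by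
  rcases S.T_cases with h | h <;> rw [h] at ht
  · obtain ⟨a, rfl⟩ := ht
    exact Nat.cast_nonneg a
  · exact ht

lemma sub_mem {s t : ℝ} (hs : s ∈ S.T) (ht : t ∈ S.T) (hst : s ≤ t) : t - s ∈ S.T := by
  rcases S.T_cases with h | h <;> rw [h] at hs ht ⊢
  · obtain ⟨a, rfl⟩ := hs
    obtain ⟨b, rfl⟩ := ht
    have hab : a ≤ b := (Nat.cast_le (α := ℝ)).1 hst
    exact ⟨b - a, by push_cast [hab]; rfl⟩
  · exact sub_nonneg.2 hst

lemma Phi_zero (ω : Ω) (z : CC × CC) : S.Phi 0 ω z = z := by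
  simp [Phi, S.φ_zero]

lemma Phi_add {s t : ℝ} (hs : s ∈ S.T) (ht : t ∈ S.T) (ω : Ω) (z : CC × CC) :
    S.Phi (s + t) ω z = S.Phi t (S.θ s ω) (S.Phi s ω z) := by
  simp [Phi, S.φ_cocycle s hs t ht]

lemma F_le_Fplus {t : ℝ} (ht : t ∈ S.T) : S.F t ≤ S.Fplus :=
  le_iSup₂_of_le t ht le_rfl

lemma Fplus_le : S.Fplus ≤ m := iSup₂_le S.F_le

lemma meas_phi {t : ℝ} (ht : t ∈ S.T) :
    Measurable (fun p : S.OmP × CC => S.φ t p.1 p.2) :=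
  (S.φ_meas t ht).mono (sup_le_sup_right (MeasurableSpace.comap_mono (S.F_le_Fplus ht)) _) le_rfl

lemma meas_Phi {t : ℝ} (ht : t ∈ S.T) :
    Measurable (fun p : (CC × CC) × S.OmP => S.Phi t p.2 p.1) := by
  have h := S.meas_phi ht
  exact (h.comp (measurable_snd.prodMk (measurable_fst.comp measurable_fst))).prodMk
    (h.comp (measurable_snd.prodMk (measurable_snd.comp measurable_fst)))

lemma meas_Phi_F {t : ℝ} (ht : t ∈ S.T) (z : CC × CC) :
    Measurable[S.F t] (fun ω : Ω => S.Phi t ω z) := by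
  have h := S.φ_meas t ht
  let : MeasurableSpace Ω := S.F t
  exact (h.comp measurable_prodMk_right).prodMk (h.comp measurable_prodMk_right)

lemma meas_Phi_m {t : ℝ} (ht : t ∈ S.T) (z : CC × CC) :
    Measurable (fun ω : Ω => S.Phi t ω z) := (S.meas_Phi_F ht z).mono (S.F_le t ht) le_rfl

def toP (ω : Ω) : S.OmP := ω

lemma meas_toP : Measurable S.toP := fun _ hs => S.Fplus_le _ hs

lemma markov {t : ℝ} (ht : t ∈ S.T) (z : CC × CC) (f : (CC × CC) × S.OmP → ℝ≥0∞)
    (hf : Measurable f) :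
    ∫⁻ ω, f (S.Phi t ω z, S.toP (S.θ t ω)) ∂S.P
      = ∫⁻ ω, ∫⁻ ω', f (S.Phi t ω z, S.toP ω') ∂S.P ∂S.P := by
  have := S.P_prob
  have hX : Measurable (fun ω : Ω => S.Phi t ω z) := S.meas_Phi_m ht z
  have hθ := S.θ_preserving t ht
  have hY : Measurable (fun ω : Ω => S.toP (S.θ t ω)) := S.meas_toP.comp hθ.measurable
  have hind : ProbabilityTheory.IndepFun (fun ω : Ω => S.Phi t ω z)
      (fun ω : Ω => S.toP (S.θ t ω)) S.P := by
    rw [ProbabilityTheory.indepFun_iff_measure_inter_preimage_eq_mul]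
    intro A B hA hB
    have h1 := S.θ_indep t ht ((fun ω : Ω => S.Phi t ω z) ⁻¹' A) (S.toP ⁻¹' B)
      (S.meas_Phi_F ht z hA) hB
    have h2 : S.P (S.θ t ⁻¹' (S.toP ⁻¹' B)) = S.P (S.toP ⁻¹' B) :=
      hθ.measure_preimage (S.meas_toP hB).nullMeasurableSet
    rw [← h2] at h1
    exact h1
  have hmap := (ProbabilityTheory.indepFun_iff_map_prod_eq_prod_map_map
    hX.aemeasurable hY.aemeasurable).1 hind
  have hYm : S.P.map (fun ω : Ω => S.toP (S.θ t ω)) = S.P.map S.toP := by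
    have := Measure.map_map (μ := S.P) S.meas_toP hθ.measurable
    rw [hθ.map_eq] at this
    exact this.symm
  have e1 : ∫⁻ ω, f (S.Phi t ω z, S.toP (S.θ t ω)) ∂S.P =
      ∫⁻ p, f p ∂(S.P.map (fun ω => (S.Phi t ω z, S.toP (S.θ t ω)))) :=
    (lintegral_map hf (hX.prodMk hY)).symm
  have : IsProbabilityMeasure (S.P.map S.toP) :=
    Measure.isProbabilityMeasure_map S.meas_toP.aemeasurable
  rw [e1, hmap, hYm, lintegral_prod _ hf.aemeasurable,
    lintegral_map hf.lintegral_prod_right' hX]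
  refine lintegral_congr fun ω => ?_
  exact lintegral_map (hf.comp measurable_prodMk_left) S.meas_toP

lemma exists_grid : ∃ h : ℕ → ℝ, (∀ k (j : ℕ), (j : ℝ) * h k ∈ S.T) ∧
    (∀ k, ∃ q : ℕ, h k = q * h (k + 1)) ∧
    ∀ t ∈ S.T, ∃ tn : ℕ → ℝ, Antitone tn ∧ Tendsto tn atTop (𝓝 t) ∧
      ∀ n, ∃ k, ∃ j : ℕ, tn n = j * h k := by
  rcases S.T_cases with hT | hT
  · refine ⟨fun _ => 1, fun k j => by simpa using S.nat_mem j, fun k => ⟨1, by simp⟩, ?_⟩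
    intro t ht
    rw [hT] at ht
    obtain ⟨j, rfl⟩ := ht
    exact ⟨fun _ => j, antitone_const, tendsto_const_nhds, fun n => ⟨0, j, by simp⟩⟩
  · refine ⟨fun k => (2⁻¹ : ℝ) ^ k, fun k j => by rw [hT]; exact mem_Ici.2 (by positivity),
      fun k => ⟨2, by simp only [pow_succ]; push_cast; ring⟩, ?_⟩
    intro t ht
    rw [hT] at ht
    have ht0 : (0:ℝ) ≤ t := ht
    refine ⟨fun n => (⌈t * 2 ^ n⌉₊ : ℝ) * (2⁻¹ : ℝ) ^ n, ?_, ?_, fun n => ⟨n, _, rfl⟩⟩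
    · apply antitone_nat_of_succ_le
      intro n
      have h1 : (⌈t * 2 ^ (n + 1)⌉₊ : ℝ) ≤ 2 * ⌈t * 2 ^ n⌉₊ := by
        have : ⌈t * 2 ^ (n + 1)⌉₊ ≤ 2 * ⌈t * 2 ^ n⌉₊ := by
          rw [Nat.ceil_le]
          push_cast
          have := Nat.le_ceil (t * 2 ^ n)
          rw [pow_succ]; linarith
        exact_mod_cast this
      have hp : (0:ℝ) < (2⁻¹ : ℝ) ^ n := by positivity
      have hp2 : (2⁻¹ : ℝ) ^ (n + 1) = 2⁻¹ ^ n * 2⁻¹ := pow_succ _ _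
      simp only [hp2]
      nlinarith
    · have hlim : Tendsto (fun n : ℕ => t + (2⁻¹ : ℝ) ^ n) atTop (𝓝 t) := by
        have := (tendsto_pow_atTop_nhds_zero_of_lt_one (r := (2⁻¹ : ℝ)) (by norm_num)
          (by norm_num)).const_add t
        simpa using this
      have key : ∀ n : ℕ, t * 2 ^ n * (2⁻¹ : ℝ) ^ n = t := by
        intro n
        rw [mul_assoc, ← mul_pow]; norm_num
      refine tendsto_of_tendsto_of_tendsto_of_le_of_le tendsto_const_nhds hlim ?_ ?_
      · intro n
        have hp : (0:ℝ) < (2⁻¹ : ℝ) ^ n := by positivity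
        have := mul_le_mul_of_nonneg_right (Nat.le_ceil (t * 2 ^ n)) hp.le
        rw [key] at this
        exact this
      · intro n
        have hp : (0:ℝ) < (2⁻¹ : ℝ) ^ n := by positivity
        have := mul_le_mul_of_nonneg_right (Nat.ceil_lt_add_one (a := t * 2 ^ n) (by positivity)).le hp.le
        rw [add_mul, key, one_mul] at this
        exact this

def hgrid : ℕ → ℝ := S.exists_grid.choose
lemma hgrid_mem (k j : ℕ) : (j : ℝ) * S.hgrid k ∈ S.T := S.exists_grid.choose_spec.1 k j
lemma hgrid_dvd (k : ℕ) : ∃ q : ℕ, S.hgrid k = q * S.hgrid (k + 1) := S.exists_grid.choose_spec.2.1 k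
lemma hgrid_dense {t : ℝ} (ht : t ∈ S.T) : ∃ tn : ℕ → ℝ, Antitone tn ∧ Tendsto tn atTop (𝓝 t) ∧
      ∀ n, ∃ k, ∃ j : ℕ, tn n = j * S.hgrid k := S.exists_grid.choose_spec.2.2 t ht

lemma open_hit {U : Set (CC × CC)} (hU : IsOpen U) {t : ℝ} (ht : t ∈ S.T) {ω : Ω} {z : CC × CC}
    (h : S.Phi t ω z ∈ U) : ∃ k, ∃ j : ℕ, S.Phi (j * S.hgrid k) ω z ∈ U := by
  obtain ⟨tn, h1, h2, h3⟩ := S.hgrid_dense ht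
  have hm : ∀ n, tn n ∈ S.T := fun n => by
    obtain ⟨k, j, e⟩ := h3 n
    rw [e]; exact S.hgrid_mem k j
  have hc : Tendsto (fun n => S.Phi (tn n) ω z) atTop (𝓝 (S.Phi t ω z)) :=
    (S.φ_cadlag_right ω t ht tn hm h1 h2 _ _ tendsto_const_nhds).prodMk_nhds
      (S.φ_cadlag_right ω t ht tn hm h1 h2 _ _ tendsto_const_nhds)
  obtain ⟨n, hn⟩ := (hc.eventually (hU.mem_nhds h)).exists
  obtain ⟨k, j, e⟩ := h3 n
  exact ⟨k, j, e ▸ hn⟩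

/-- finite-step Ville inequality -/
lemma ville_step {f : CC × CC → ℝ≥0∞} (hf : Measurable f)
    (hsup : ∀ t ∈ S.T, ∀ z, ∫⁻ ω, f (S.Phi t ω z) ∂S.P ≤ f z) (η : ℝ≥0∞) (h : ℝ)
    (hh : ∀ j : ℕ, (j : ℝ) * h ∈ S.T) (n : ℕ) (z : CC × CC) :
    η * S.P {ω | ∃ i ≤ n, η < f (S.Phi ((i : ℕ) * h) ω z)} ≤ f z := by
  have := S.P_prob
  induction n generalizing z with
  | zero =>
    by_cases hz : η < f z
    · calc _ ≤ η * 1 := by gcongr; exact prob_le_one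
        _ ≤ f z := by rw [mul_one]; exact hz.le
    · have : {ω | ∃ i ≤ 0, η < f (S.Phi ((i : ℕ) * h) ω z)} = ∅ := by
        ext ω
        simp [S.Phi_zero, not_lt.1 hz]
      rw [this]; simp
  | succ n ih =>
    by_cases hz : η < f z
    · calc _ ≤ η * 1 := by gcongr; exact prob_le_one
        _ ≤ f z := by rw [mul_one]; exact hz.le
    · have hh1 : h ∈ S.T := by simpa using hh 1
      set B : Set ((CC × CC) × S.OmP) :=
        {p | ∃ i ≤ n, η < f (S.Phi ((i : ℕ) * h) p.2 p.1)} with hB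
      have hBm : MeasurableSet B := by
        have : B = ⋃ i ∈ Finset.range (n + 1), {p | η < f (S.Phi ((i : ℕ) * h) p.2 p.1)} := by
          ext p
          simp [hB]
        rw [this]
        exact Finset.measurableSet_biUnion _ fun i _ =>
          measurableSet_lt measurable_const (hf.comp (S.meas_Phi (hh i)))
      have hsub : {ω | ∃ i ≤ n + 1, η < f (S.Phi ((i : ℕ) * h) ω z)} ⊆
          {ω | (S.Phi h ω z, S.toP (S.θ h ω)) ∈ B} := by
        rintro ω ⟨i, hi, hlt⟩
        rcases i with _ | i
        · simp [S.Phi_zero] at hlt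
          exact absurd hlt hz
        · refine ⟨i, by omega, ?_⟩
          have e : ((i + 1 : ℕ) : ℝ) * h = h + i * h := by push_cast; ring
          rw [e, S.Phi_add hh1 (hh i)] at hlt
          exact hlt
      have hmk := S.markov hh1 z (B.indicator 1) (measurable_one.indicator hBm)
      have hX := S.meas_Phi_m hh1 z
      have hY : Measurable (fun ω : Ω => S.toP (S.θ h ω)) :=
        S.meas_toP.comp (S.θ_preserving h hh1).measurable
      have e1 : ∫⁻ ω, B.indicator 1 (S.Phi h ω z, S.toP (S.θ h ω)) ∂S.P =
          S.P {ω | (S.Phi h ω z, S.toP (S.θ h ω)) ∈ B} :=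
        lintegral_indicator_one (μ := S.P) (hX.prodMk hY hBm)
      have e2 : ∀ z', ∫⁻ ω', B.indicator 1 (z', S.toP ω') ∂S.P =
          S.P {ω | ∃ i ≤ n, η < f (S.Phi ((i : ℕ) * h) ω z')} := fun z' =>
        lintegral_indicator_one (μ := S.P)
          ((measurable_prodMk_left (x := z')).comp S.meas_toP hBm)
      calc η * S.P {ω | ∃ i ≤ n + 1, η < f (S.Phi ((i : ℕ) * h) ω z)}
          ≤ η * S.P {ω | (S.Phi h ω z, S.toP (S.θ h ω)) ∈ B} := by gcongr
        _ = η * ∫⁻ ω, ∫⁻ ω', B.indicator 1 (S.Phi h ω z, S.toP ω') ∂S.P ∂S.P := by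
            rw [← e1, hmk]
        _ ≤ ∫⁻ ω, η * ∫⁻ ω', B.indicator 1 (S.Phi h ω z, S.toP ω') ∂S.P ∂S.P :=
            lintegral_const_mul_le _ _
        _ ≤ ∫⁻ ω, f (S.Phi h ω z) ∂S.P := by
            refine lintegral_mono fun ω => ?_
            rw [e2]; exact ih _
        _ ≤ f z := hsup h hh1 z

lemma ville {f : CC × CC → ℝ≥0∞} (hf : Measurable f)
    (hsup : ∀ t ∈ S.T, ∀ z, ∫⁻ ω, f (S.Phi t ω z) ∂S.P ≤ f z) (η : ℝ≥0∞) (z : CC × CC) :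
    η * S.P {ω | ∃ k, ∃ j : ℕ, η < f (S.Phi (j * S.hgrid k) ω z)} ≤ f z := by
  have e1 : {ω | ∃ k, ∃ j : ℕ, η < f (S.Phi (j * S.hgrid k) ω z)} =
      ⋃ k, ⋃ n, {ω | ∃ i ≤ n, η < f (S.Phi ((i : ℕ) * S.hgrid k) ω z)} := by
    ext ω
    simp only [mem_iUnion]
    constructor
    · rintro ⟨k, j, h⟩; exact ⟨k, j, j, le_rfl, h⟩
    · rintro ⟨k, n, j, -, h⟩; exact ⟨k, j, h⟩
  have m1 : Monotone fun k => ⋃ n, {ω | ∃ i ≤ n, η < f (S.Phi ((i : ℕ) * S.hgrid k) ω z)} := by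
    apply monotone_nat_of_le_succ
    intro k ω hω
    simp only [mem_iUnion] at hω ⊢
    obtain ⟨n, i, -, h⟩ := hω
    obtain ⟨q, hq⟩ := S.hgrid_dvd k
    refine ⟨i * q, i * q, le_rfl, ?_⟩
    rw [hq] at h
    push_cast
    rwa [mul_assoc]
  have m2 : ∀ k, Monotone fun n => {ω | ∃ i ≤ n, η < f (S.Phi ((i : ℕ) * S.hgrid k) ω z)} := by
    rintro k n n' hn ω ⟨i, hi, h⟩
    exact ⟨i, hi.trans hn, h⟩
  rw [e1, m1.measure_iUnion, ENNReal.mul_iSup]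
  refine iSup_le fun k => ?_
  rw [(m2 k).measure_iUnion, ENNReal.mul_iSup]
  exact iSup_le fun n => S.ville_step hf hsup η _ (S.hgrid_mem k) n z

end RDS

namespace RDS
variable {Ω : Type} [m : MeasurableSpace Ω] (S : RDS Ω)

lemma continuous_Phi (t : ℝ) (ω : Ω) : Continuous (S.Phi t ω) :=
  ((S.φ t ω).continuous.comp continuous_fst).prodMk ((S.φ t ω).continuous.comp continuous_snd)

variable (ρ : Measure CC) [IsProbabilityMeasure ρ]

lemma harm_u (ha : Atomless ρ) (hf : FullSupport ρ) (hs : S.ReverseStationary ρ)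
    {t : ℝ} (ht : t ∈ S.T) (z : CC × CC) :
    ∫⁻ ω, ENNReal.ofReal (uu ρ (S.Phi t ω z)) ∂S.P = ENNReal.ofReal (uu ρ z) := by
  obtain ⟨x, y⟩ := z
  rw [← arc_eq_uu ρ ha hf, hs t ht _ (measurableSet_arc x y)]
  refine lintegral_congr fun ω => ?_
  rw [arc_orient (S.φ_orient t ht ω), arc_eq_uu ρ ha hf]
  rfl

lemma super_v (ha : Atomless ρ) (hf : FullSupport ρ) (hs : S.ReverseStationary ρ)
    {t : ℝ} (ht : t ∈ S.T) (z : CC × CC) :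
    ∫⁻ ω, ENNReal.ofReal (vv ρ (S.Phi t ω z)) ∂S.P ≤ ENNReal.ofReal (vv ρ z) := by
  have := S.P_prob
  have hm : Measurable (fun ω => uu ρ (S.Phi t ω z)) :=
    (measurable_uu ρ ha).comp (S.meas_Phi_m ht z)
  have hinteg : Integrable (fun ω => uu ρ (S.Phi t ω z)) S.P := by
    refine Integrable.of_bound hm.aestronglyMeasurable 1 (Eventually.of_forall fun ω => ?_)
    rw [Real.norm_eq_abs, abs_of_nonneg (uu_nonneg ρ _)]
    exact (uu_lt_one ρ _).le
  have hinteg2 : Integrable (fun ω => (uu ρ (S.Phi t ω z)) ^ 2) S.P := by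
    refine Integrable.of_bound (hm.pow_const 2).aestronglyMeasurable 1
      (Eventually.of_forall fun ω => ?_)
    rw [Real.norm_eq_abs, abs_of_nonneg (by positivity)]
    exact pow_le_one₀ (uu_nonneg ρ _) (uu_lt_one ρ _).le
  have hu : ∫ ω, uu ρ (S.Phi t ω z) ∂S.P = uu ρ z := by
    rw [integral_eq_lintegral_of_nonneg_ae (Eventually.of_forall fun ω => uu_nonneg ρ _)
      hm.aestronglyMeasurable, S.harm_u ρ ha hf hs ht, ENNReal.toReal_ofReal (uu_nonneg ρ _)]
  have hv : Integrable (fun ω => vv ρ (S.Phi t ω z)) S.P := by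
    have : (fun ω => vv ρ (S.Phi t ω z)) =
        fun ω => uu ρ (S.Phi t ω z) - (uu ρ (S.Phi t ω z)) ^ 2 := by
      ext ω; unfold vv; ring
    rw [this]; exact hinteg.sub hinteg2
  rw [← ofReal_integral_eq_lintegral_ofReal hv (Eventually.of_forall fun ω => vv_nonneg ρ _)]
  apply ENNReal.ofReal_le_ofReal
  have hle : ∀ ω, vv ρ (S.Phi t ω z) ≤
      vv ρ z + (1 - 2 * uu ρ z) * (uu ρ (S.Phi t ω z) - uu ρ z) := by
    intro ω
    unfold vv
    nlinarith [sq_nonneg (uu ρ (S.Phi t ω z) - uu ρ z)]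
  have hi3 : Integrable (fun ω => (1 - 2 * uu ρ z) * (uu ρ (S.Phi t ω z) - uu ρ z)) S.P :=
    (hinteg.sub (integrable_const _)).const_mul _
  have hi4 : Integrable (fun ω => vv ρ z + (1 - 2 * uu ρ z) * (uu ρ (S.Phi t ω z) - uu ρ z)) S.P :=
    (integrable_const _).add hi3
  refine (integral_mono hv hi4 hle).trans (le_of_eq ?_)
  rw [integral_add (integrable_const _) hi3, integral_const_mul,
    integral_sub hinteg (integrable_const _), hu]
  simp

/-- the averaged function -/
def qq (t : ℝ) (z : CC × CC) : ℝ≥0∞ := ∫⁻ ω, ENNReal.ofReal (vv ρ (S.Phi t ω z)) ∂S.P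

lemma meas_V (ha : Atomless ρ) : Measurable (fun z => ENNReal.ofReal (vv ρ z)) :=
  (continuous_vv ρ ha).measurable.ennreal_ofReal

lemma qq_add (ha : Atomless ρ) {s t : ℝ} (hs : s ∈ S.T) (ht : t ∈ S.T) (z : CC × CC) :
    S.qq ρ (s + t) z = ∫⁻ ω, S.qq ρ t (S.Phi s ω z) ∂S.P := by
  have := S.markov hs z (fun p => ENNReal.ofReal (vv ρ (S.Phi t p.2 p.1)))
    ((meas_V ρ ha).comp (S.meas_Phi ht))
  unfold qq
  simp only [S.Phi_add hs ht]
  exact this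

lemma qq_continuous (ha : Atomless ρ) {t : ℝ} (ht : t ∈ S.T) : Continuous (S.qq ρ t) := by
  have := S.P_prob
  have hm : ∀ z, Measurable (fun ω => vv ρ (S.Phi t ω z)) := fun z =>
    (continuous_vv ρ ha).measurable.comp (S.meas_Phi_m ht z)
  have hb : ∀ z ω, ‖vv ρ (S.Phi t ω z)‖ ≤ 1 := fun z ω => by
    rw [Real.norm_eq_abs, abs_of_nonneg (vv_nonneg ρ _)]
    exact vv_le_one ρ _
  have h1 : Continuous (fun z => ∫ ω, vv ρ (S.Phi t ω z) ∂S.P) := by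
    apply continuous_of_dominated (bound := fun _ => 1)
    · exact fun z => (hm z).aestronglyMeasurable
    · exact fun z => Eventually.of_forall (hb z)
    · exact integrable_const _
    · exact Eventually.of_forall fun ω => (continuous_vv ρ ha).comp (S.continuous_Phi t ω)
  have h2 : S.qq ρ t = fun z => ENNReal.ofReal (∫ ω, vv ρ (S.Phi t ω z) ∂S.P) := by
    ext z
    rw [ofReal_integral_eq_lintegral_ofReal
      (Integrable.of_bound (hm z).aestronglyMeasurable 1 (Eventually.of_forall (hb z)))
      (Eventually.of_forall fun ω => vv_nonneg ρ _)]
    rfl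
  rw [h2]
  exact ENNReal.continuous_ofReal.comp h1

lemma qq_anti (ha : Atomless ρ) (hf : FullSupport ρ) (hst : S.ReverseStationary ρ)
    {s t : ℝ} (hs : s ∈ S.T) (ht : t ∈ S.T) (h : s ≤ t) (z : CC × CC) :
    S.qq ρ t z ≤ S.qq ρ s z := by
  have e : t = s + (t - s) := by ring
  have hd := S.sub_mem hs ht h
  rw [e, S.qq_add ρ ha hs hd]
  exact lintegral_mono fun ω => S.super_v ρ ha hf hst hd _

lemma qq_zero (z : CC × CC) : S.qq ρ 0 z = ENNReal.ofReal (vv ρ z) := by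
  have := S.P_prob
  simp [qq, S.Phi_zero]

lemma qq_le_one (t : ℝ) (z : CC × CC) : S.qq ρ t z ≤ 1 := by
  have := S.P_prob
  calc S.qq ρ t z ≤ ∫⁻ _, 1 ∂S.P := lintegral_mono fun ω => by
        rw [← ENNReal.ofReal_one]; exact ENNReal.ofReal_le_ofReal (vv_le_one ρ _)
    _ = 1 := by simp

def vinf (z : CC × CC) : ℝ≥0∞ := ⨅ n : ℕ, S.qq ρ n z

lemma vinf_usc (ha : Atomless ρ) : UpperSemicontinuous (S.vinf ρ) :=
  upperSemicontinuous_iInf fun n => (S.qq_continuous ρ ha (S.nat_mem n)).upperSemicontinuous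

lemma vinf_zero (hc : S.Contractible) (ha : Atomless ρ) (hf : FullSupport ρ)
    (hst : S.ReverseStationary ρ) (z : CC × CC) : S.vinf ρ z = 0 := by
  have := S.P_prob
  obtain ⟨z0, -, hz0⟩ := UpperSemicontinuousOn.exists_isMaxOn (s := (univ : Set (CC × CC)))
    univ_nonempty isCompact_univ ((S.vinf_usc ρ ha).upperSemicontinuousOn _)
  have hmax : ∀ z, S.vinf ρ z ≤ S.vinf ρ z0 := fun z => hz0 (mem_univ z)
  set M := S.vinf ρ z0 with hM
  by_contra hz
  have hMpos : 0 < M := (pos_iff_ne_zero.2 hz).trans_le (hmax z)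
  have hMfin : M ≠ ∞ := ne_top_of_le_ne_top one_ne_top ((iInf_le _ 0).trans (S.qq_le_one ρ _ z0))
  set K : Set (CC × CC) := {z | M ≤ S.vinf ρ z} with hK
  have hKc : IsClosed K := (S.vinf_usc ρ ha).isClosed_preimage M
  have hinv : ∀ z ∈ K, ∀ s ∈ S.T, ∀ᵐ ω ∂S.P, S.Phi s ω z ∈ K := by
    intro z hz s hs
    have hmeas : ∀ n : ℕ, Measurable (fun ω => S.qq ρ n (S.Phi s ω z)) := fun n =>
      (S.qq_continuous ρ ha (S.nat_mem n)).measurable.comp (S.meas_Phi_m hs z)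
    have e1 : ∫⁻ ω, S.vinf ρ (S.Phi s ω z) ∂S.P = ⨅ n : ℕ, S.qq ρ (s + n) z := by
      unfold vinf
      rw [lintegral_iInf hmeas]
      · exact iInf_congr fun n => (S.qq_add ρ ha hs (S.nat_mem n) z).symm
      · intro n n' hn ω
        exact S.qq_anti ρ ha hf hst (S.nat_mem n) (S.nat_mem n') (by exact_mod_cast hn) _
      · refine ne_top_of_le_ne_top one_ne_top ?_
        calc _ ≤ ∫⁻ _, 1 ∂S.P := lintegral_mono fun ω => S.qq_le_one ρ _ _
          _ = 1 := by simp
    have e2 : M ≤ ∫⁻ ω, S.vinf ρ (S.Phi s ω z) ∂S.P := by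
      rw [e1]
      refine le_iInf fun n => (show M ≤ S.vinf ρ z from hz).trans ?_
      obtain ⟨N, hN⟩ := exists_nat_ge (s + n)
      exact (iInf_le _ N).trans
        (S.qq_anti ρ ha hf hst (S.add_mem hs (S.nat_mem n)) (S.nat_mem N) hN z)
    have hae := ae_eq_of_ae_le_of_lintegral_le (μ := S.P)
      (f := fun ω => S.vinf ρ (S.Phi s ω z)) (g := fun _ => M)
      (Eventually.of_forall fun ω => hmax _)
      (ne_top_of_le_ne_top hMfin (by
        calc _ ≤ ∫⁻ _, M ∂S.P := lintegral_mono fun ω => hmax _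
          _ = M := by simp))
      aemeasurable_const (by simpa using e2)
    filter_upwards [hae] with ω hω
    exact hω.ge
  obtain ⟨z1, hz1, hmin⟩ := hKc.isCompact.exists_isMinOn (f := fun z : CC × CC => dist z.1 z.2)
    ⟨z0, le_refl M⟩ continuous_dist.continuousOn
  have hne : z1.1 ≠ z1.2 := by
    intro h
    have h1 : M ≤ S.qq ρ ((0 : ℕ) : ℝ) z1 := (show M ≤ S.vinf ρ z1 from hz1).trans (iInf_le _ 0)
    rw [Nat.cast_zero, S.qq_zero] at h1
    have h2 : uu ρ z1 = 0 := by
      have : z1 = (z1.1, z1.1) := by ext1 <;> simp [h]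
      rw [this, uu_self]
    simp [vv, h2] at h1
    exact hMpos.ne' h1
  have hae : ∀ᵐ ω ∂S.P, ∀ k, ∀ j : ℕ, S.Phi (j * S.hgrid k) ω z1 ∈ K :=
    ae_all_iff.2 fun k => ae_all_iff.2 fun j => hinv z1 hz1 _ (S.hgrid_mem k j)
  refine (hc z1.1 z1.2 hne).ne' ?_
  refine measure_mono_null ?_ (ae_iff.1 hae)
  rintro ω ⟨t, ht, hlt⟩ hcon
  have hU : IsOpen {z : CC × CC | dist z.1 z.2 < dist z1.1 z1.2} :=
    isOpen_lt continuous_dist continuous_const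
  obtain ⟨k, j, hkj⟩ := S.open_hit hU ht (ω := ω) (z := z1) hlt
  have hm : dist z1.1 z1.2 ≤ _ := hmin (hcon k j)
  exact absurd hkj (not_lt.2 hm)

lemma qq_tendsto (hc : S.Contractible) (ha : Atomless ρ) (hf : FullSupport ρ)
    (hst : S.ReverseStationary ρ) (z : CC × CC) {ε : ℝ≥0∞} (hε : 0 < ε) :
    ∃ n : ℕ, S.qq ρ n z < ε := by
  have h := S.vinf_zero ρ hc ha hf hst z
  exact iInf_lt_iff.1 (show (⨅ n : ℕ, S.qq ρ n z) < ε from h.trans_lt hε)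

/-- `v` is eventually at most `η` almost surely -/
lemma v_eventually (hc : S.Contractible) (ha : Atomless ρ) (hf : FullSupport ρ)
    (hst : S.ReverseStationary ρ) (z : CC × CC) {η : ℝ} (hη : 0 < η) :
    ∀ᵐ ω ∂S.P, ∃ n : ℕ, ∀ t ∈ S.T, (n : ℝ) ≤ t → vv ρ (S.Phi t ω z) ≤ η := by
  have := S.P_prob
  have hη' : ENNReal.ofReal η ≠ 0 := by simpa using hη
  rw [ae_iff]
  set V : CC × CC → ℝ≥0∞ := fun z => ENNReal.ofReal (vv ρ z) with hV
  set E : ENNReal := ENNReal.ofReal η with hE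
  set B : Set ((CC × CC) × S.OmP) :=
    {p | ∃ k, ∃ j : ℕ, E < V (S.Phi (j * S.hgrid k) p.2 p.1)} with hB
  have hBm : MeasurableSet B := by
    have : B = ⋃ k, ⋃ j : ℕ, {p | E < V (S.Phi (j * S.hgrid k) p.2 p.1)} := by
      ext p; simp [hB]
    rw [this]
    exact MeasurableSet.iUnion fun k => MeasurableSet.iUnion fun j =>
      measurableSet_lt measurable_const ((meas_V ρ ha).comp (S.meas_Phi (S.hgrid_mem k j)))
  have key : ∀ n : ℕ, E * S.P {ω | ¬ ∃ n : ℕ, ∀ t ∈ S.T, (n : ℝ) ≤ t → vv ρ (S.Phi t ω z) ≤ η}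
      ≤ S.qq ρ n z := by
    intro n
    have hn := S.nat_mem n
    have hsub : {ω | ¬ ∃ n : ℕ, ∀ t ∈ S.T, (n : ℝ) ≤ t → vv ρ (S.Phi t ω z) ≤ η} ⊆
        {ω | (S.Phi n ω z, S.toP (S.θ n ω)) ∈ B} := by
      intro ω hω
      have hω' : ¬ ∃ n : ℕ, ∀ t ∈ S.T, (n : ℝ) ≤ t → vv ρ (S.Phi t ω z) ≤ η := hω
      push Not at hω'
      obtain ⟨t, ht, hnt, hlt⟩ := hω' n
      have hd := S.sub_mem hn ht hnt
      have e : t = n + (t - n) := by ring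
      rw [e, S.Phi_add hn hd] at hlt
      have hU : IsOpen {z | η < vv ρ z} := isOpen_lt continuous_const (continuous_vv ρ ha)
      obtain ⟨k, j, hkj⟩ := S.open_hit hU hd hlt
      exact ⟨k, j, (ENNReal.ofReal_lt_ofReal_iff_of_nonneg hη.le).2 hkj⟩
    have hmk := S.markov hn z (B.indicator 1) (measurable_one.indicator hBm)
    have hX := S.meas_Phi_m hn z
    have hY : Measurable (fun ω : Ω => S.toP (S.θ n ω)) :=
      S.meas_toP.comp (S.θ_preserving n hn).measurable
    have e1 : ∫⁻ ω, B.indicator 1 (S.Phi n ω z, S.toP (S.θ n ω)) ∂S.P =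
        S.P {ω | (S.Phi n ω z, S.toP (S.θ n ω)) ∈ B} :=
      lintegral_indicator_one (μ := S.P) (hX.prodMk hY hBm)
    have e2 : ∀ z', ∫⁻ ω', B.indicator 1 (z', S.toP ω') ∂S.P =
        S.P {ω | ∃ k, ∃ j : ℕ, E < V (S.Phi (j * S.hgrid k) ω z')} := fun z' =>
      lintegral_indicator_one (μ := S.P)
        ((measurable_prodMk_left (x := z')).comp S.meas_toP hBm)
    calc _ ≤ E * S.P {ω | (S.Phi n ω z, S.toP (S.θ n ω)) ∈ B} := by gcongr
      _ = E * ∫⁻ ω, ∫⁻ ω', B.indicator 1 (S.Phi n ω z, S.toP ω') ∂S.P ∂S.P := by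
          rw [← e1, hmk]
      _ ≤ ∫⁻ ω, E * ∫⁻ ω', B.indicator 1 (S.Phi n ω z, S.toP ω') ∂S.P ∂S.P :=
          lintegral_const_mul_le _ _
      _ ≤ ∫⁻ ω, V (S.Phi n ω z) ∂S.P := by
          refine lintegral_mono fun ω => ?_
          rw [e2]
          exact S.ville (meas_V ρ ha) (fun t ht z => S.super_v ρ ha hf hst ht z) E _
      _ = S.qq ρ n z := rfl
  by_contra hcon
  obtain ⟨n, hn⟩ := S.qq_tendsto ρ hc ha hf hst z (pos_iff_ne_zero.2 (mul_ne_zero hη' hcon))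
  exact absurd hn (not_lt.2 (key n))

/-- Ville for `u` in real time -/
lemma u_ville (ha : Atomless ρ) (hf : FullSupport ρ)
    (hst : S.ReverseStationary ρ) (z : CC × CC) {η : ℝ} (hη : 0 ≤ η) :
    ENNReal.ofReal η * S.P {ω | ∃ t ∈ S.T, η < uu ρ (S.Phi t ω z)} ≤ ENNReal.ofReal (uu ρ z) := by
  have h := S.ville (f := fun z => ENNReal.ofReal (uu ρ z)) (measurable_uu ρ ha).ennreal_ofReal
    (fun t ht z => (S.harm_u ρ ha hf hst ht z).le) (ENNReal.ofReal η) z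
  refine le_trans ?_ h
  refine mul_le_mul' le_rfl (measure_mono ?_)
  rintro ω ⟨t, ht, hlt⟩
  obtain ⟨k, j, hkj⟩ := S.open_hit (isOpen_uu_gt ρ ha hη) ht hlt
  exact ⟨k, j, (ENNReal.ofReal_lt_ofReal_iff_of_nonneg hη).2 hkj⟩

lemma u_bound (ha : Atomless ρ) (hf : FullSupport ρ)
    (hst : S.ReverseStationary ρ) (z : CC × CC) (A : Set Ω)
    (hA : ∀ η : ℝ, 0 ≤ η → η < 1 → A ⊆ {ω | ∃ t ∈ S.T, η < uu ρ (S.Phi t ω z)}) :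
    S.P A ≤ ENNReal.ofReal (uu ρ z) := by
  have := S.P_prob
  have h1 : ∀ η : ℝ, 0 ≤ η → η < 1 → η * (S.P A).toReal ≤ uu ρ z := by
    intro η h0 h1
    have h2 : ENNReal.ofReal η * S.P A ≤ ENNReal.ofReal (uu ρ z) :=
      le_trans (by gcongr; exact hA η h0 h1) (S.u_ville ρ ha hf hst z h0)
    have := ENNReal.toReal_mono ofReal_ne_top h2
    rwa [ENNReal.toReal_mul, ENNReal.toReal_ofReal h0,
      ENNReal.toReal_ofReal (uu_nonneg ρ _)] at this
  rw [← ENNReal.ofReal_toReal (measure_ne_top S.P A)]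
  apply ENNReal.ofReal_le_ofReal
  have ht : Tendsto (fun η : ℝ => η * (S.P A).toReal) (𝓝[<] 1) (𝓝 (1 * (S.P A).toReal)) :=
    ((continuous_id.mul continuous_const).tendsto 1).mono_left nhdsWithin_le_nhds
  rw [one_mul] at ht
  refine le_of_tendsto ht ?_
  filter_upwards [Ioo_mem_nhdsLT (zero_lt_one' ℝ)] with η hη
  exact h1 η hη.1.le hη.2

lemma tFilter_neBot : S.tFilter.NeBot := by
  unfold tFilter
  rw [inf_principal_neBot_iff]
  intro U hU
  obtain ⟨a, ha⟩ := mem_atTop_sets.1 hU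
  obtain ⟨n, hn⟩ := exists_nat_ge a
  exact ⟨n, ha n hn, S.nat_mem n⟩

lemma eventually_tFilter {p : ℝ → Prop} :
    (∀ᶠ t in S.tFilter, p t) ↔ ∃ n : ℕ, ∀ t ∈ S.T, (n : ℝ) ≤ t → p t := by
  unfold tFilter
  rw [eventually_inf_principal, eventually_atTop]
  constructor
  · rintro ⟨a, ha⟩
    obtain ⟨n, hn⟩ := exists_nat_ge a
    exact ⟨n, fun t ht hnt => ha t (hn.trans hnt) ht⟩
  · rintro ⟨n, hn⟩
    exact ⟨n, fun t hnt ht => hn t ht hnt⟩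

lemma prob_u_tendsto (hc : S.Contractible) (ha : Atomless ρ) (hf : FullSupport ρ)
    (hst : S.ReverseStationary ρ) {x y : CC} (hxy : x ≠ y) :
    S.P {ω | Tendsto (fun t => uu ρ (S.Phi t ω (x, y))) S.tFilter (𝓝 0)} =
      1 - ENNReal.ofReal (uu ρ (x, y)) := by
  have := S.P_prob
  have := S.tFilter_neBot
  set E0 := {ω | Tendsto (fun t => uu ρ (S.Phi t ω (x, y))) S.tFilter (𝓝 0)} with hE0
  have hTev : ∀ᶠ t in S.tFilter, t ∈ S.T := S.eventually_tFilter.2 ⟨0, fun t ht _ => ht⟩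
  apply le_antisymm
  · have h1 : S.P E0 ≤ ENNReal.ofReal (uu ρ (y, x)) := by
      refine S.u_bound ρ ha hf hst (y, x) E0 fun η h0 h1 ω hω => ?_
      have hω' : Tendsto (fun t => uu ρ (S.Phi t ω (x, y))) S.tFilter (𝓝 0) := hω
      obtain ⟨t, htl, ht⟩ := ((hω'.eventually (gt_mem_nhds (sub_pos.2 h1))).and hTev).exists
      refine ⟨t, ht, ?_⟩
      have hs : uu ρ (S.Phi t ω (y, x)) = 1 - uu ρ (S.Phi t ω (x, y)) :=
        uu_swap ρ hf ((S.φ t ω).injective.ne hxy)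
      rw [hs]; linarith
    rwa [uu_swap ρ hf hxy, ENNReal.ofReal_sub _ (uu_nonneg ρ _), ENNReal.ofReal_one] at h1
  · have hae : ∀ᵐ ω ∂S.P, ∀ k : ℕ, ∃ n : ℕ, ∀ t ∈ S.T, (n : ℝ) ≤ t →
        vv ρ (S.Phi t ω (x, y)) ≤ 1 / ((k : ℝ) + 1) :=
      ae_all_iff.2 fun k => S.v_eventually ρ hc ha hf hst _ (by positivity)
    set N := {ω | ∀ k : ℕ, ∃ n : ℕ, ∀ t ∈ S.T, (n : ℝ) ≤ t →
        vv ρ (S.Phi t ω (x, y)) ≤ 1 / ((k : ℝ) + 1)} with hN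
    have hNc : S.P Nᶜ = 0 := hae
    have h1 : S.P (N \ E0) ≤ ENNReal.ofReal (uu ρ (x, y)) := by
      refine S.u_bound ρ ha hf hst (x, y) _ fun η h0 h1 ω hω => ?_
      by_contra hcon
      have hcon' : ¬ ∃ t ∈ S.T, η < uu ρ (S.Phi t ω (x, y)) := hcon
      push Not at hcon'
      apply hω.2
      show Tendsto _ _ _
      rw [Metric.tendsto_nhds]
      intro ε hε
      obtain ⟨k, hk⟩ := exists_nat_one_div_lt (mul_pos hε (sub_pos.2 h1))
      obtain ⟨n, hn⟩ := hω.1 k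
      refine S.eventually_tFilter.2 ⟨n, fun t ht hnt => ?_⟩
      have e1 := hn t ht hnt
      have e2 := hcon' t ht
      rw [Real.dist_eq, sub_zero, abs_of_nonneg (uu_nonneg ρ _)]
      have e3 := uu_nonneg ρ (S.Phi t ω (x, y))
      unfold vv at e1
      by_contra hge
      push Not at hge
      have : ε * (1 - η) ≤ uu ρ (S.Phi t ω (x, y)) * (1 - uu ρ (S.Phi t ω (x, y))) :=
        mul_le_mul hge (by linarith) (by linarith) e3
      linarith
    rw [tsub_le_iff_right]
    calc (1 : ℝ≥0∞) = S.P univ := measure_univ.symm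
      _ ≤ S.P (E0 ∪ (N \ E0) ∪ Nᶜ) := measure_mono (fun ω _ => by
          by_cases h1 : ω ∈ E0 <;> by_cases h2 : ω ∈ N <;> simp [h1, h2])
      _ ≤ S.P E0 + S.P (N \ E0) + S.P Nᶜ :=
          (measure_union_le _ _).trans (by gcongr; exact measure_union_le _ _)
      _ ≤ S.P E0 + ENNReal.ofReal (uu ρ (x, y)) := by
          rw [hNc, add_zero]; gcongr

end RDS

lemma atomless_volume : Atomless (volume : Measure CC) := fun x => by
  have h := AddCircle.volume_closedBall (1:ℝ) (x := x) 0
  simpa using h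

lemma fullSupport_volume : FullSupport (volume : Measure CC) :=
  fun _ hU hne => hU.measure_pos volume hne

theorem final_aux
    {Ω : Type} [MeasurableSpace Ω] (S : RDS Ω) (h : S.Contractible)
    (ρ : Measure UnitAddCircle) [IsProbabilityMeasure ρ]
    (hatomless : Atomless ρ) (hfull : FullSupport ρ) (hstat : S.ReverseStationary ρ)
    (J : Set UnitAddCircle) (hJ : IsPreconnected J) :
    S.P {ω | Tendsto (fun t => volume (⇑(S.φ t ω) '' J)) S.tFilter (𝓝 0)} = 1 - ρ J := by
  have := S.P_prob
  have := S.tFilter_neBot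
  have hvp : IsProbabilityMeasure (volume : Measure CC) := ⟨UnitAddCircle.measure_univ⟩
  have hsub0 : ∀ {ν : Measure CC}, Atomless ν → ∀ {A : Set CC}, A.Subsingleton → ν A = 0 := by
    intro ν hν A hA
    rcases hA.eq_empty_or_singleton with rfl | ⟨x, rfl⟩
    · simp
    · exact hν x
  rcases preconnected_classify hJ with hs | hs | ⟨a, b, hab, h1, h2⟩
  · have e : ∀ t ω, volume (⇑(S.φ t ω) '' J) = 0 := fun t ω => hsub0 atomless_volume (hs.image _)
    simp [e, hsub0 hatomless hs]
  · have e : ∀ t ω, volume (⇑(S.φ t ω) '' J) = 1 := fun t ω => by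
      have h3 : volume (⇑(S.φ t ω) '' J)ᶜ = 0 := by
        rw [← image_compl_eq (S.φ t ω).bijective]
        exact hsub0 atomless_volume (hs.image _)
      exact (prob_compl_eq_zero_iff₀ (NullMeasurableSet.of_compl (NullMeasurableSet.of_null h3))).1 h3
    have h4 : ρ J = 1 :=
      have h3 : ρ Jᶜ = 0 := hsub0 hatomless hs
      (prob_compl_eq_zero_iff₀ (NullMeasurableSet.of_compl (NullMeasurableSet.of_null h3))).1 h3
    simp [e, h4, tendsto_const_nhds_iff]
  · have hpair : ∀ {ν : Measure CC}, Atomless ν → ∀ x y : CC, ν {x, y} = 0 := by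
      intro ν hν x y
      rw [insert_eq]
      exact measure_union_null (hν x) (hν y)
    have hρJ : ρ J = ENNReal.ofReal (uu ρ (a, b)) := by
      rw [← arc_eq_uu ρ hatomless hfull]
      refine le_antisymm ((measure_mono h2).trans ((measure_union_le _ _).trans ?_))
        (measure_mono h1)
      rw [hpair hatomless, add_zero]
    have hvol : ∀ t ∈ S.T, ∀ ω, volume (⇑(S.φ t ω) '' J) = volume (arc (S.φ t ω a) (S.φ t ω b)) := by
      intro t ht ω
      rw [← arc_orient (S.φ_orient t ht ω)]
      refine le_antisymm ((measure_mono (image_mono h2)).trans ?_) (measure_mono (image_mono h1))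
      rw [image_union, image_pair]
      refine (measure_union_le _ _).trans ?_
      rw [hpair atomless_volume, add_zero]
    rw [hρJ, ← S.prob_u_tendsto ρ h hatomless hfull hstat hab]
    congr 1
    ext ω
    show Tendsto _ _ _ ↔ Tendsto _ _ _
    have hu : ∀ t, ρ (arc (S.φ t ω a) (S.φ t ω b)) = ENNReal.ofReal (uu ρ (S.Phi t ω (a, b))) :=
      fun t => arc_eq_uu ρ hatomless hfull _ _
    have hTev : ∀ᶠ t in S.tFilter, t ∈ S.T := S.eventually_tFilter.2 ⟨0, fun t ht _ => ht⟩
    constructor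
    · intro ht
      have h3 : Tendsto (fun t => ENNReal.ofReal (uu ρ (S.Phi t ω (a, b)))) S.tFilter (𝓝 0) := by
        rw [ENNReal.tendsto_nhds_zero] 
        intro ε hε
        obtain ⟨δ, hδ, hcmp⟩ := arc_measure_compare volume ρ fullSupport_volume hatomless hε
        filter_upwards [ht.eventually (gt_mem_nhds hδ), hTev] with t ht1 ht2
        rw [hvol t ht2] at ht1
        rw [← hu]
        exact (hcmp _ _ ht1).le
      have h4 := (ENNReal.tendsto_toReal zero_ne_top).comp h3
      refine h4.congr fun t => ?_
      exact ENNReal.toReal_ofReal (uu_nonneg ρ _)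
    · intro ht
      rw [ENNReal.tendsto_nhds_zero]
      intro ε hε
      obtain ⟨δ, hδ, hcmp⟩ := arc_measure_compare ρ volume hfull atomless_volume hε
      have h3 := ENNReal.tendsto_ofReal ht
      rw [ENNReal.ofReal_zero] at h3
      filter_upwards [h3.eventually (gt_mem_nhds hδ), hTev] with t ht1 ht2
      rw [hvol t ht2]
      rw [← hu] at ht1
      exact (hcmp _ _ ht1).le

/-- under the hypotheses of Lemma 3.3, for any connected `J ⊆ 𝕊¹`,
`ℙ(ω : l(φ(t,ω)J) → 0) = 1 - ρ(J)`. -/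
theorem prob_length_tendsto_zero_eq_one_sub_rho
    {Ω : Type} [MeasurableSpace Ω] (S : RDS Ω) (h : S.Contractible)
    (ρ : Measure UnitAddCircle) [IsProbabilityMeasure ρ]
    (hatomless : Atomless ρ) (hfull : FullSupport ρ) (hstat : S.ReverseStationary ρ)
    (J : Set UnitAddCircle) (hJ : IsPreconnected J) :
    S.P {ω | Tendsto (fun t => volume (⇑(S.φ t ω) '' J)) S.tFilter (𝓝 0)} = 1 - ρ J := by
  exact final_aux S h ρ hatomless hfull hstat J hJ
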